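/- arXiv:2307.01912 — 2 statements merged into one kernel-verified Lean document; each statement's English description precedes it below -/
import Mathlib

section
/- Let n, m be natural numbers and let x be an integer with x + m ≥ 0. Assume that x + 2i - j ≠ 0 for all integers i, j with 1 ≤ i ≤ n and 1 ≤ j ≤ m. Then the determinant of the n×n rational matrix B_{n,m}(x) whose (i,j)-entry (for 0 ≤ i, j ≤ n-1) is C(x+m+2i, i-j+m) − C(x+m+2i, i-j+m-1) equals ∏_{i=1}^{n} ∏_{j=1}^{m} ((x+i-j)(x+2i+j-2)) / ((x+2i-j)(i+j-1)). -/
/-- `C N k` : the binomial coefficient `C(N,k)` for `N : ℕ` and `k : ℤ`,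
with the convention that it is `0` when `k < 0` or `k > N`, as a rational. -/
def C (N : ℕ) (k : ℤ) : ℚ := if 0 ≤ k then (N.choose k.toNat : ℚ) else 0

/-!
Krattenthaler's determinant `det (∏_{k < j} (X_i + B_k) · ∏_{k > j} (X_i + A_k))` is found by
evaluating polynomials of degree less than `n`: replacing the points `X` by other points changes the
determinant by a ratio of Vandermonde determinants, and at the points `-A` the matrix is upper
triangular.

For `x ≥ 0` the ballot identity `(N + 1) (C(N, k) - C(N, k - 1)) = (N + 1 - 2k) C(N + 1, k)` turns
`B_{n,m}(x)`, up to row and column factors, into a Krattenthaler matrix with `X_i = i`,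
`B_k = m - k` and `A_k = x + 1 + k`. For `x < 0` both sides vanish when `n > 0`: the nonvanishing of
the denominators forces `n < -x`, so the first row is zero, as is the factor at `i = 1`, `j = -x`.
-/

open Finset
open scoped Nat

section FiniteProducts

theorem prod_Iio_val {M : Type*} [CommMonoid M] {n : ℕ} (f : ℕ → M) (j : Fin n) :
    ∏ k ∈ Iio j, f k = ∏ k ∈ range j, f k := by
  rw [← Nat.Iio_eq_range, ← Fin.map_valEmbedding_Iio, prod_map]
  rfl

theorem prod_Ioi_val {M : Type*} [CommMonoid M] {n : ℕ} (f : ℕ → M) (j : Fin n) :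
    ∏ k ∈ Ioi j, f k = ∏ k ∈ Ioo (j : ℕ) n, f k := by
  rw [← Fin.map_valEmbedding_Ioi, prod_map]
  rfl

theorem prod_prod_Ioi_eq_prod_prod_Iio {ι M : Type*} [Fintype ι] [Preorder ι]
    [LocallyFiniteOrderTop ι] [LocallyFiniteOrderBot ι] [CommMonoid M] (f : ι → ι → M) :
    ∏ i, ∏ j ∈ Ioi i, f i j = ∏ j, ∏ i ∈ Iio j, f i j :=
  prod_comm' (by simp)

theorem prod_Icc_one {M : Type*} [CommMonoid M] (f : ℕ → M) (n : ℕ) :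
    ∏ i ∈ Icc 1 n, f i = ∏ i ∈ range n, f (i + 1) := by
  rw [range_eq_Ico, prod_Ico_add', zero_add, Ico_add_one_right_eq_Icc]

theorem prod_range_two_mul {M : Type*} [CommMonoid M] (f : ℕ → M) (n : ℕ) :
    ∏ i ∈ range (2 * n), f i = ∏ i ∈ range n, f (2 * i) * f (2 * i + 1) := by
  induction n with
  | zero => simp
  | succ n ih => rw [mul_add_one, prod_range_succ, prod_range_succ, prod_range_succ, ih, mul_assoc]

theorem prod_sub_mul_prod_add {R : Type*} [CommRing R] (y : R) (m p : ℕ) :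
    (∏ j ∈ range m, (y - j)) * ∏ k ∈ range p, (y + 1 + k) =
      (∏ j ∈ range m, (y + p - j)) * ∏ k ∈ range p, (y - m + 1 + k) := by
  induction p with
  | zero => simp
  | succ p ih =>
    have shift : (∏ j ∈ range m, (y + (p + 1 : ℕ) - j)) * (y + p + 1 - m) =
        (∏ j ∈ range m, (y + p - j)) * (y + p + 1) := by
      have := (prod_range_succ (fun j : ℕ => y + (p + 1 : ℕ) - j) m).symm.trans
        (prod_range_succ' _ m)
      simpa [← add_assoc] using this
    rw [prod_range_succ, prod_range_succ]
    linear_combination (y + 1 + p) * ih - (∏ k ∈ range p, (y - m + 1 + k)) * shift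

end FiniteProducts

section Krattenthaler

variable {R : Type*} [CommRing R] {n : ℕ}

theorem of_eval_eq_vandermonde_mul (p : Fin n → Polynomial R) (hp : ∀ j, (p j).natDegree < n)
    (v : Fin n → R) :
    Matrix.of (fun i j => (p j).eval (v i)) =
      Matrix.vandermonde v * Matrix.of fun k j : Fin n => (p j).coeff k := by
  ext i j
  simp only [Matrix.of_apply, Matrix.mul_apply, Matrix.vandermonde_apply,
    Polynomial.eval_eq_sum_range' (hp j), mul_comm (v i ^ _),
    Fin.sum_univ_eq_sum_range fun k => (p j).coeff k * v i ^ k]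

theorem det_eval_mul_det_vandermonde_comm (p : Fin n → Polynomial R)
    (hp : ∀ j, (p j).natDegree < n) (v w : Fin n → R) :
    (Matrix.of fun i j => (p j).eval (v i)).det * (Matrix.vandermonde w).det =
      (Matrix.of fun i j => (p j).eval (w i)).det * (Matrix.vandermonde v).det := by
  simp only [of_eval_eq_vandermonde_mul p hp, Matrix.det_mul]
  ring

/-- The polynomial whose values are the entries of column `j` of `krattenthalerMatrix`. -/
noncomputable def krattenthalerPoly (A B : Fin n → R) (j : Fin n) : Polynomial R :=
  (∏ k ∈ Iio j, (Polynomial.X + Polynomial.C (B k))) *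
    ∏ k ∈ Ioi j, (Polynomial.X + Polynomial.C (A k))

/-- The matrix of Krattenthaler's determinant lemma (`krattenthalerMatrix_det`). Only
`A 1, …, A (n - 1)` and `B 0, …, B (n - 2)` occur in it. -/
def krattenthalerMatrix (X A B : Fin n → R) : Matrix (Fin n) (Fin n) R :=
  Matrix.of fun i j => (∏ k ∈ Iio j, (X i + B k)) * ∏ k ∈ Ioi j, (X i + A k)

theorem krattenthalerMatrix_eq_of_eval (X A B : Fin n → R) :
    krattenthalerMatrix X A B = Matrix.of fun i j => (krattenthalerPoly A B j).eval (X i) := by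
  ext i j
  simp [krattenthalerMatrix, krattenthalerPoly, Polynomial.eval_prod]

theorem natDegree_krattenthalerPoly_lt (A B : Fin n → R) (j : Fin n) :
    (krattenthalerPoly A B j).natDegree < n := by
  have hprod (s : Finset (Fin n)) (c : Fin n → R) :
      (∏ k ∈ s, (Polynomial.X + Polynomial.C (c k))).natDegree ≤ #s :=
    (Polynomial.natDegree_prod_le _ _).trans <| by
      simpa using sum_le_card_nsmul s _ 1 fun k _ =>
        (Polynomial.natDegree_add_C (a := c k)).le.trans Polynomial.natDegree_X_le
  calc (krattenthalerPoly A B j).natDegree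
      ≤ #(Iio j) + #(Ioi j) :=
        Polynomial.natDegree_mul_le.trans (add_le_add (hprod _ B) (hprod _ A))
    _ < n := by rw [Fin.card_Iio, Fin.card_Ioi]; omega

theorem krattenthalerMatrix_neg_det (A B : Fin n → R) :
    (krattenthalerMatrix (fun i => -A i) A B).det =
      (∏ i, ∏ j ∈ Ioi i, (B i - A j)) * ∏ i, ∏ j ∈ Ioi i, (A j - A i) := by
  rw [Matrix.det_of_isUpperTriangular, prod_prod_Ioi_eq_prod_prod_Iio fun i j => B i - A j,
    ← prod_mul_distrib]
  · simp only [krattenthalerMatrix, Matrix.of_apply, neg_add_eq_sub]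
  · intro i j hji
    exact mul_eq_zero_of_right _ (prod_eq_zero (mem_Ioi.2 hji) (neg_add_cancel _))

theorem krattenthalerMatrix_det_of_injective [IsDomain R] (X A B : Fin n → R)
    (hA : Function.Injective A) :
    (krattenthalerMatrix X A B).det = ∏ i, ∏ j ∈ Ioi i, (X j - X i) * (A j - B i) := by
  have hV : (Matrix.vandermonde fun i => -A i).det ≠ 0 :=
    Matrix.det_vandermonde_ne_zero_iff.2 (neg_injective.comp hA)
  have exchange := det_eval_mul_det_vandermonde_comm _ (natDegree_krattenthalerPoly_lt A B) X
    fun i => -A i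
  rw [← krattenthalerMatrix_eq_of_eval, ← krattenthalerMatrix_eq_of_eval,
    krattenthalerMatrix_neg_det] at exchange
  refine mul_right_cancel₀ hV (exchange.trans ?_)
  simp only [Matrix.det_vandermonde, ← prod_mul_distrib]
  exact prod_congr rfl fun i _ => prod_congr rfl fun j _ => by ring

-- The identity is polynomial with integer coefficients, so it suffices to treat indeterminates.
theorem krattenthalerMatrix_det (X A B : Fin n → R) :
    (krattenthalerMatrix X A B).det = ∏ i, ∏ j ∈ Ioi i, (X j - X i) * (A j - B i) := by
  let x (s : Fin 3) (i : Fin n) : MvPolynomial (Fin 3 × Fin n) ℤ := MvPolynomial.X (s, i)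
  have generic := krattenthalerMatrix_det_of_injective (x 0) (x 1) (x 2) fun i j hij =>
    (Prod.ext_iff.1 (MvPolynomial.X_injective hij)).2
  have specialized := congrArg
    (MvPolynomial.eval₂Hom (Int.castRingHom R) fun s => ![X, A, B] s.1 s.2) generic
  simpa [krattenthalerMatrix, RingHom.map_det, x, Matrix.map, RingHom.mapMatrix_apply]
    using specialized

end Krattenthaler

section Binomial

theorem C_natCast (N k : ℕ) : C N k = N.choose k := by
  simp [C]

theorem C_of_neg (N : ℕ) {k : ℤ} (hk : k < 0) : C N k = 0 :=
  if_neg hk.not_ge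

theorem C_of_lt {N : ℕ} {k : ℤ} (hk : N < k) : C N k = 0 := by
  lift k to ℕ using by omega
  rw [C_natCast, Nat.choose_eq_zero_of_lt (by omega), Nat.cast_zero]

theorem succ_mul_C_sub_C_pred (N : ℕ) (k : ℤ) :
    (N + 1 : ℚ) * (C N k - C N (k - 1)) = (N + 1 - 2 * k) * C (N + 1) k := by
  rcases lt_trichotomy k 0 with hk | rfl | hk
  · rw [C_of_neg _ hk, C_of_neg _ hk, C_of_neg _ (by omega)]
    ring
  · simp [C]
  · obtain ⟨k, rfl⟩ : ∃ l : ℕ, k = (l + 1 : ℕ) := ⟨(k - 1).toNat, by omega⟩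
    have pascal : ((N + 1).choose (k + 1) : ℚ) = N.choose k + N.choose (k + 1) :=
      mod_cast Nat.choose_succ_succ' N k
    have absorption : (N + 1 : ℚ) * N.choose k = (N + 1).choose (k + 1) * (k + 1) :=
      mod_cast Nat.add_one_mul_choose_eq N k
    rw [show ((k + 1 : ℕ) : ℤ) - 1 = k by push_cast; ring]
    simp only [C_natCast]
    push_cast
    linear_combination (-(N : ℚ) - 1) * pascal - 2 * absorption

theorem C_add_mul_factorial_mul_factorial (p q j : ℕ) :
    C (p + q) (p - j) * (p ! * (q + j)!) = (p + q)! * ∏ k ∈ range j, ((p : ℚ) - k) := by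
  rw [← descPochhammer_eval_eq_prod_range, descPochhammer_eval_eq_descFactorial]
  rcases lt_or_ge p j with hj | hj
  · rw [C_of_neg _ (by omega), Nat.descFactorial_of_lt hj]
    simp
  · obtain ⟨r, rfl⟩ := Nat.exists_eq_add_of_le' hj
    rw [show ((r + j : ℕ) : ℤ) - j = r by push_cast; ring, C_natCast,
      show r + j + q = r + (q + j) by ring, ← Nat.factorial_mul_descFactorial hj,
      Nat.add_sub_cancel, ← Nat.add_choose_mul_factorial_mul_factorial r (q + j),
      Nat.choose_symm_add]
    push_cast
    ring

theorem prod_range_add_one_add_mul_factorial (N p : ℕ) :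
    (∏ k ∈ range p, (N + 1 + k : ℚ)) * N ! = (N + p)! := by
  rw [← Nat.factorial_mul_ascFactorial, Nat.ascFactorial_eq_prod_range]
  push_cast
  ring

theorem prod_Ioo_add_one_add_mul_factorial (N : ℕ) {j n : ℕ} (hj : j < n) :
    (∏ k ∈ Ioo j n, (N + 1 + k : ℚ)) * (N + 1 + j)! = (N + n)! := by
  obtain ⟨p, rfl⟩ := Nat.exists_eq_add_of_le (Nat.succ_le_of_lt hj)
  rw [← Ico_add_one_left_eq_Ioo, prod_Ico_eq_prod_range]
  convert prod_range_add_one_add_mul_factorial (N + 1 + j) p using 3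
  · congr 1
    omega
  · push_cast
    ring
  · omega

end Binomial

section BallotDeterminant

/-- The matrix `B_{n,m}(x)`, with rows and columns indexed from `0`. It agrees with the usual one
only for `0 ≤ x + m`, as `Int.toNat` replaces negative `x + m + 2 * i` by `0`. -/
def matrixB (n m : ℕ) (x : ℤ) : Matrix (Fin n) (Fin n) ℚ :=
  Matrix.of fun i j =>
    C (x + m + 2 * (i : ℕ)).toNat ((i : ℤ) - (j : ℤ) + m) -
    C (x + m + 2 * (i : ℕ)).toNat ((i : ℤ) - (j : ℤ) + m - 1)

theorem matrixB_natCast_apply_mul {n : ℕ} (m x : ℕ) (i j : Fin n) :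
    ((m + i)! * (x + i + n)! : ℚ) * matrixB n m x i j =
      (x + m + 2 * i)! * ((x - m + 1 + 2 * j) * krattenthalerMatrix (fun i : Fin n => (i : ℚ))
        (fun k => x + 1 + k) (fun k => m - k) i j) := by
  have ballot := succ_mul_C_sub_C_pred (x + m + 2 * i) ((i : ℤ) - j + m)
  have binomial := C_add_mul_factorial_mul_factorial (m + i) (x + i + 1) j
  rw [show m + i + (x + i + 1) = x + m + 2 * i + 1 by ring,
    show ((m + i : ℕ) : ℤ) - j = (i : ℤ) - j + m by push_cast; ring,
    Nat.factorial_succ] at binomial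
  have kratt : krattenthalerMatrix (fun i : Fin n => (i : ℚ)) (fun k => x + 1 + k)
      (fun k => m - k) i j = (∏ k ∈ range j, (((m + i : ℕ) : ℚ) - k)) *
        ∏ k ∈ Ioo (j : ℕ) n, (((x + i : ℕ) : ℚ) + 1 + k) := by
    rw [← prod_Iio_val, ← prod_Ioi_val]
    simp only [krattenthalerMatrix, Matrix.of_apply]
    congr 1 <;> exact prod_congr rfl fun k _ => by push_cast; ring
  have toNat_row : ((x : ℤ) + m + 2 * (i : ℕ)).toNat = x + m + 2 * i := by omega
  have hN : ((x + m + 2 * i : ℕ) + 1 : ℚ) ≠ 0 := by positivity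
  rw [kratt, ← prod_Ioo_add_one_add_mul_factorial (x + i) j.isLt]
  simp only [matrixB, Matrix.of_apply, toNat_row]
  refine mul_left_cancel₀ hN ?_
  generalize ∏ k ∈ range j, (((m + i : ℕ) : ℚ) - k) = P at *
  generalize ∏ k ∈ Ioo (j : ℕ) n, (((x + i : ℕ) : ℚ) + 1 + k) = Q at *
  push_cast at ballot binomial ⊢
  linear_combination (m + i)! * Q * (x + i + 1 + j)! * ballot + (x - m + 1 + 2 * j) * Q * binomial

theorem matrixB_natCast_det_mul (n m x : ℕ) :
    (∏ i ∈ range n, ((m + i)! * (x + i + n)! : ℚ)) * (matrixB n m x).det =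
      ∏ i ∈ range n, ((x + m + 2 * i)! * i ! * ∏ k ∈ range (i + 1), (x - m + 1 + i + k : ℚ)) := by
  have triangle (j : ℕ) : (x - m + 1 + 2 * j : ℚ) *
      ∏ i ∈ range j, ((j : ℚ) - i) * (x + 1 + j - (m - i)) =
        j ! * ∏ k ∈ range (j + 1), (x - m + 1 + j + k : ℚ) := by
    rw [← Nat.descFactorial_self, ← descPochhammer_eval_eq_descFactorial,
      descPochhammer_eval_eq_prod_range, prod_mul_distrib, prod_range_succ]
    simp only [show ∀ i : ℕ, (x + 1 + j - (m - i) : ℚ) = x - m + 1 + j + i from fun i => by ring]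
    ring
  have scaled : Matrix.of (fun i j : Fin n =>
        ((m + i)! * (x + i + n)! : ℚ) * matrixB n m x i j) =
      Matrix.of fun i j : Fin n => ((x + m + 2 * i)! : ℚ) * Matrix.of (fun i j : Fin n =>
        (x - m + 1 + 2 * j : ℚ) * krattenthalerMatrix (fun i : Fin n => (i : ℚ))
          (fun k => x + 1 + k) (fun k => m - k) i j) i j :=
    Matrix.ext (matrixB_natCast_apply_mul m x)
  have dets := congrArg Matrix.det scaled
  rw [Matrix.det_mul_column, Matrix.det_mul_column, Matrix.det_mul_row, krattenthalerMatrix_det,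
    prod_prod_Ioi_eq_prod_prod_Iio, ← prod_mul_distrib, ← prod_mul_distrib] at dets
  rw [← Fin.prod_univ_eq_prod_range, ← Fin.prod_univ_eq_prod_range, dets]
  refine prod_congr rfl fun j _ => ?_
  rw [mul_assoc, ← triangle,
    prod_Iio_val fun i : ℕ => ((j : ℕ) - i : ℚ) * (x + 1 + (j : ℕ) - (m - i))]

theorem prod_range_ratio_mul_factorials (x m i : ℕ) (h : ∀ j < m, (x + 2 * i + 1 - j : ℚ) ≠ 0) :
    (∏ j ∈ range m, ((x + i - j : ℚ) * (x + 2 * i + 1 + j)) /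
      ((x + 2 * i + 1 - j) * (i + 1 + j))) * ((m + i)! * ((x + 2 * i)! * (x + 2 * i + 1)!)) =
    (x + m + 2 * i)! * i ! * (∏ k ∈ range (i + 1), (x - m + 1 + i + k : ℚ)) * (x + i)! := by
  have hden : ∏ j ∈ range m, (x + 2 * i + 1 - j : ℚ) ≠ 0 :=
    prod_ne_zero_iff.2 fun j hj => h j (mem_range.1 hj)
  have hden' : ∏ j ∈ range m, (i + 1 + j : ℚ) ≠ 0 := by positivity
  have shift := prod_sub_mul_prod_add (x + i : ℚ) m (i + 1)
  have numerator := prod_range_add_one_add_mul_factorial (x + 2 * i) m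
  have denominator := prod_range_add_one_add_mul_factorial i m
  have middle := prod_range_add_one_add_mul_factorial (x + i) (i + 1)
  rw [show x + 2 * i + m = x + m + 2 * i by ring] at numerator
  rw [show x + i + (i + 1) = x + 2 * i + 1 by ring] at middle
  rw [add_comm m i, ← denominator, ← middle, ← numerator, prod_div_distrib, prod_mul_distrib,
    prod_mul_distrib]
  push_cast at shift ⊢
  simp only [show ∀ k : ℕ, (x - m + 1 + i + k : ℚ) = x + i - m + 1 + k from fun k => by ring,
    show ∀ j : ℕ, (x + i + (i + 1) - j : ℚ) = x + 2 * i + 1 - j from fun k => by ring] at shift ⊢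
  generalize ∏ j ∈ range m, (x + 2 * i + 1 - j : ℚ) = c at *
  field_simp
  linear_combination shift

theorem matrixB_natCast_det (n m x : ℕ) (h : ∀ i < n, ∀ j < m, (x + 2 * i + 1 - j : ℚ) ≠ 0) :
    (matrixB n m x).det = ∏ i ∈ range n, ∏ j ∈ range m,
      ((x + i - j : ℚ) * (x + 2 * i + 1 + j)) / ((x + 2 * i + 1 - j) * (i + 1 + j)) := by
  have rows := prod_congr (rfl : range n = _) fun i hi =>
    prod_range_ratio_mul_factorials x m i (h i (mem_range.1 hi))
  have consecutive : (∏ i ∈ range n, (x + i + n)! : ℚ) * ∏ i ∈ range n, ((x + i)! : ℚ) =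
      ∏ i ∈ range n, ((x + 2 * i)! * (x + 2 * i + 1)! : ℚ) := by
    have := prod_range_two_mul (fun i => ((x + i)! : ℚ)) n
    rw [two_mul, prod_range_add] at this
    simpa only [mul_comm, add_assoc, add_comm n] using this
  have scale_ne_zero :
      (∏ i ∈ range n, ((m + i)! * (x + i + n)! : ℚ)) * ∏ i ∈ range n, ((x + i)! : ℚ) ≠ 0 := by
    positivity
  refine mul_left_cancel₀ scale_ne_zero ?_
  rw [mul_right_comm, matrixB_natCast_det_mul, ← prod_mul_distrib, ← rows, prod_mul_distrib,
    prod_mul_distrib, prod_mul_distrib (g := fun i => ((x + i + n)! : ℚ)), ← consecutive]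
  ring

theorem matrixB_det_of_lt_neg {n m : ℕ} {x : ℤ} (hn : 0 < n) (hx : 0 ≤ x + m) (hnx : n < -x) :
    (matrixB n m x).det = 0 := by
  refine Matrix.det_eq_zero_of_row_eq_zero ⟨0, hn⟩ fun j => ?_
  simp only [matrixB, Matrix.of_apply]
  rw [C_of_lt (by push_cast; omega), C_of_lt (by push_cast; omega), sub_zero]

theorem matrixB_det_of_neg {n m : ℕ} {x : ℤ} (hneg : x < 0) (hx : 0 ≤ x + m)
    (h : ∀ i j : ℤ, 1 ≤ i → i ≤ n → 1 ≤ j → j ≤ m → x + 2 * i - j ≠ 0) :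
    (matrixB n m x).det = ∏ i ∈ Icc 1 n, ∏ j ∈ Icc 1 m,
      ((x + i - j : ℚ) * (x + 2 * i + j - 2)) / ((x + 2 * i - j) * (i + j - 1)) := by
  rcases Nat.eq_zero_or_pos n with rfl | hn
  · simp
  obtain ⟨y, rfl⟩ : ∃ y : ℕ, x = -y := ⟨x.natAbs, by omega⟩
  have hny : n < y := by
    by_contra! hyn
    exact h y y (by omega) (by omega) (by omega) (by omega) (by ring)
  rw [matrixB_det_of_lt_neg hn hx (by omega), eq_comm]
  refine prod_eq_zero (mem_Icc.2 ⟨le_rfl, hn⟩)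
    (prod_eq_zero (i := y) (mem_Icc.2 (by omega)) ?_)
  push_cast
  ring

theorem matrixB_det_of_nonneg {n m : ℕ} {x : ℤ} (hnonneg : 0 ≤ x)
    (h : ∀ i j : ℤ, 1 ≤ i → i ≤ n → 1 ≤ j → j ≤ m → x + 2 * i - j ≠ 0) :
    (matrixB n m x).det = ∏ i ∈ Icc 1 n, ∏ j ∈ Icc 1 m,
      ((x + i - j : ℚ) * (x + 2 * i + j - 2)) / ((x + 2 * i - j) * (i + j - 1)) := by
  lift x to ℕ using hnonneg
  rw [matrixB_natCast_det n m x fun i hi j hj => ?_]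
  · simp only [prod_Icc_one]
    refine prod_congr rfl fun i _ => prod_congr rfl fun j _ => ?_
    push_cast
    congr 1 <;> ring
  · have denominator_ne_zero := h (i + 1) (j + 1) (by omega) (by omega) (by omega) (by omega)
    rw [← Int.cast_ne_zero (α := ℚ)] at denominator_ne_zero
    push_cast at denominator_ne_zero
    convert denominator_ne_zero using 1
    ring

end BallotDeterminant

theorem det_B_eq (n m : ℕ) (x : ℤ) (hx : 0 ≤ x + m)
    (h : ∀ i j : ℤ, 1 ≤ i → i ≤ n → 1 ≤ j → j ≤ m → x + 2 * i - j ≠ 0) :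
    Matrix.det (Matrix.of fun i j : Fin n =>
      C (x + m + 2 * (i : ℕ)).toNat ((i : ℤ) - (j : ℤ) + m) -
      C (x + m + 2 * (i : ℕ)).toNat ((i : ℤ) - (j : ℤ) + m - 1)) =
    ∏ i ∈ Finset.Icc 1 n, ∏ j ∈ Finset.Icc 1 m,
      (((x : ℚ) + i - j) * ((x : ℚ) + 2 * i + j - 2)) /
      ((((x : ℚ) + 2 * i - j)) * ((i : ℚ) + j - 1)) := by
  change (matrixB n m x).det = _
  rcases lt_or_ge x 0 with hneg | hnonneg
  · exact matrixB_det_of_neg hneg hx h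
  · exact matrixB_det_of_nonneg hnonneg h
end

section
/- Let a, b, c be natural numbers. Then the determinant of the c×c rational matrix whose (i,j)-entry (for 0 ≤ i, j ≤ c-1) is the binomial coefficient C(i+j+a+b, i+a) equals ∏_{i=0}^{a-1} ∏_{j=0}^{b-1} ∏_{k=0}^{c-1} (i+j+k+2) / (i+j+k+1). -/
/-!
Since `C(i+j+a+b, i+a) = (i+j+a+b)! / ((i+a)! (j+b)!)`, pulling the denominators out of the rows
and columns leaves the Hankel determinant of the factorials `(i+j+a+b)!`. Its `i`-th row is
`(i+a+b)!` times the values of the rising factorials `1, X, X(X+1), …` at `i+a+b+1`; these are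
monic of degrees `0, 1, 2, …`, so a Vandermonde determinant remains. For fixed `k`, the factor
`(i+j+k+2) / (i+j+k+1)` is the mixed multiplicative second difference in `i` and `j` of
`(i+j+k)!`, so the box product telescopes in both directions to the same quotient of factorials.
-/

open Finset Matrix
open scoped Nat

section Determinants

variable {R : Type*} [CommRing R] {n : ℕ}

theorem det_eval_ascPochhammer (v : Fin n → R) :
    (of fun i j : Fin n => (ascPochhammer R j).eval (v i)).det = (vandermonde v).det := by
  nontriviality R
  have monic (k : ℕ) : (ascPochhammer R k).Monic :=
    ascPochhammer_map (Nat.castRingHom R) k ▸ (monic_ascPochhammer ℕ k).map _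
  have natDegree_eq (k : ℕ) : (ascPochhammer R k).natDegree = k := by
    rw [← ascPochhammer_map (Nat.castRingHom R), (monic_ascPochhammer ℕ k).natDegree_map,
      ascPochhammer_natDegree]
  exact (det_eval_matrixOfPolynomials_eq_det_vandermonde v _ (fun j => natDegree_eq j)
    fun j => monic j).symm

theorem det_factorial_add (v : Fin n → ℕ) :
    (of fun i j : Fin n => ((v i + j)! : R)).det =
      (∏ i, ((v i)! : R)) * (vandermonde fun i => (v i : R)).det := by
  have entry_eq (i j : Fin n) :
      ((v i + j)! : R) = (v i)! * (ascPochhammer R j).eval ((v i : R) + 1) := by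
    rw [← Nat.factorial_mul_ascFactorial, Nat.cast_mul, Nat.cast_ascFactorial, Nat.cast_succ]
  simp only [entry_eq]
  rw [← det_vandermonde_add _ 1, ← det_eval_ascPochhammer]
  exact det_mul_column _ _

variable (R n)

theorem det_vandermonde_natCast :
    (vandermonde fun i : Fin n => (i : R)).det = ∏ k ∈ range n, (k ! : R) := by
  cases n with
  | zero => simp
  | succ n =>
    rw [det_vandermonde_id_eq_superFactorial, ← Nat.prod_range_succ_factorial, Nat.cast_prod]

theorem det_hankel_factorial (s : ℕ) :
    (of fun i j : Fin n => ((i + s + j : ℕ)! : R)).det =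
      ∏ k ∈ range n, ((k + s)! * k ! : R) := by
  rw [det_factorial_add fun i : Fin n => (i : ℕ) + s]
  simp only [Nat.cast_add]
  rw [det_vandermonde_add, det_vandermonde_natCast, prod_mul_distrib,
    prod_range fun k => ((k + s)! : R)]

end Determinants

theorem det_hankel_choose (K : Type*) [Field K] [CharZero K] (a b n : ℕ) :
    (of fun i j : Fin n => ((i + j + a + b : ℕ).choose (i + a) : K)).det =
      ∏ k ∈ range n, ((k + (a + b))! * k ! / ((k + a)! * (k + b)!) : K) := by
  have entry_eq (i j : Fin n) : ((i + j + a + b : ℕ).choose (i + a) : K) =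
      ((i + a)! : K)⁻¹ * (((j + b)! : K)⁻¹ * ((i + (a + b) + j : ℕ)! : K)) := by
    rw [show (i + j + a + b : ℕ) = (i + a) + (j + b) by ring, Nat.cast_add_choose,
      show (i + a + (j + b) : ℕ) = i + (a + b) + j by ring]
    ring
  simp only [entry_eq]
  calc _ = (∏ i : Fin n, ((i + a)! : K)⁻¹) * ((∏ j : Fin n, ((j + b)! : K)⁻¹) *
        (of fun i j : Fin n => ((i + (a + b) + j : ℕ)! : K)).det) := by
        rw [← det_mul_row, ← det_mul_column]; rfl
    _ = _ := by
        rw [det_hankel_factorial, ← prod_range fun k => ((k + a)! : K)⁻¹,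
          ← prod_range fun k => ((k + b)! : K)⁻¹, ← prod_mul_distrib, ← prod_mul_distrib]
        exact prod_congr rfl fun k _ => by ring

section Telescoping

variable {G : Type*} [CommGroupWithZero G]

theorem prod_range_div_of_ne_zero (f : ℕ → G) (hf : ∀ i, f i ≠ 0) (n : ℕ) :
    ∏ i ∈ range n, f (i + 1) / f i = f n / f 0 :=
  prod_range_induction _ (fun n => f n / f 0) (div_self (hf 0)) n
    fun i _ => by rw [mul_comm, div_mul_div_cancel₀ (hf i)]

theorem prod_range_prod_range_div_of_ne_zero (f : ℕ → ℕ → G) (hf : ∀ i j, f i j ≠ 0) (m n : ℕ) :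
    ∏ i ∈ range m, ∏ j ∈ range n,
        f (i + 1) (j + 1) / f i (j + 1) / (f (i + 1) j / f i j) =
      f m n / f m 0 / (f 0 n / f 0 0) := by
  calc _ = ∏ i ∈ range m, f (i + 1) n / f i n / (f (i + 1) 0 / f i 0) :=
        prod_congr rfl fun i _ => prod_range_div_of_ne_zero (fun j => f (i + 1) j / f i j)
          (fun j => div_ne_zero (hf _ j) (hf _ j)) n
    _ = ∏ i ∈ range m, f (i + 1) n / f (i + 1) 0 / (f i n / f i 0) :=
        prod_congr rfl fun i _ => div_div_div_comm ..
    _ = _ := prod_range_div_of_ne_zero (fun i => f i n / f i 0)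
        (fun i => div_ne_zero (hf i _) (hf i _)) m

end Telescoping

theorem prod_box_layer (K : Type*) [Field K] [CharZero K] (a b k : ℕ) :
    ∏ i ∈ range a, ∏ j ∈ range b, ((i : K) + j + k + 2) / ((i : K) + j + k + 1) =
      (k + (a + b))! * k ! / ((k + a)! * (k + b)!) := by
  have factorial_ne_zero (m : ℕ) : (m ! : K) ≠ 0 := Nat.cast_ne_zero.mpr m.factorial_ne_zero
  have factor_eq (i j : ℕ) : ((i : K) + j + k + 2) / ((i : K) + j + k + 1) =
      (k + (i + 1 + (j + 1)))! / (k + (i + (j + 1)))! /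
        ((k + (i + 1 + j))! / (k + (i + j))!) := by
    have denom_ne_zero : (k : K) + (i + j) + 1 ≠ 0 := mod_cast Nat.succ_ne_zero (k + (i + j))
    rw [show (i : K) + j + k = k + (i + j) by ring,
      show k + (i + 1 + (j + 1)) = k + (i + j) + 1 + 1 by ring,
      show k + (i + (j + 1)) = k + (i + j) + 1 by ring,
      show k + (i + 1 + j) = k + (i + j) + 1 by ring]
    simp only [Nat.factorial_succ]
    push_cast
    field_simp [factorial_ne_zero]
    ring
  simp only [factor_eq]
  rw [prod_range_prod_range_div_of_ne_zero (fun i j => ((k + (i + j))! : K))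
    fun _ _ => factorial_ne_zero _]
  simp only [add_zero, zero_add]
  rw [div_div_div_eq]

theorem det_binomial_symmetric_general (K : Type*) [Field K] [CharZero K] (a b c : ℕ) :
    (of fun i j : Fin c => ((i + j + a + b : ℕ).choose (i + a) : K)).det =
      ∏ i ∈ range a, ∏ j ∈ range b, ∏ k ∈ range c,
        ((i : K) + j + k + 2) / ((i : K) + j + k + 1) := by
  calc _ = ∏ k ∈ range c, ((k + (a + b))! * k ! / ((k + a)! * (k + b)!) : K) :=
        det_hankel_choose K a b c
    _ = ∏ k ∈ range c, ∏ i ∈ range a, ∏ j ∈ range b,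
          ((i : K) + j + k + 2) / ((i : K) + j + k + 1) :=
        prod_congr rfl fun k _ => (prod_box_layer K a b k).symm
    _ = _ := prod_comm.trans (prod_congr rfl fun i _ => prod_comm)

theorem det_binomial_symmetric (a b c : ℕ) :
    Matrix.det (Matrix.of fun i j : Fin c =>
      ((Nat.choose ((i : ℕ) + (j : ℕ) + a + b) ((i : ℕ) + a) : ℚ))) =
    ∏ i ∈ Finset.range a, ∏ j ∈ Finset.range b, ∏ k ∈ Finset.range c,
      ((i : ℚ) + j + k + 2) / ((i : ℚ) + j + k + 1) :=
  det_binomial_symmetric_general ℚ a b c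
end
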